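/- Let n ≥ 3 and let f : ℝ → (0,∞) be a C³ function. On the open set {x ∈ ℝⁿ : x¹ > 0}, let k be the Riemannian metric with diagonal matrix k₁₁ = 1, k₂₂ = f(x¹)², k_{αα} = 1 for 3 ≤ α ≤ n, and k_{ij} = 0 for i ≠ j. Then the Weyl tensor of k satisfies W₁₂₂₁ = −((n−3)/(n−1)) f(x¹) f''(x¹) at every point with x¹ > 0. -/

import Mathlib

noncomputable section

open scoped BigOperators

/-- Coordinate partial derivative `∂_i F` of a scalar function on `ℝᵐ`. -/
def pd {m : ℕ} (i : Fin m) (F : (Fin m → ℝ) → ℝ) (x : Fin m → ℝ) : ℝ :=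
  fderiv ℝ F x (Pi.single i 1)

/-- Christoffel symbols `Γ^k_{ij} = ½ Σ_l g^{kl}(∂_i g_{jl} + ∂_j g_{il} − ∂_l g_{ij})`. -/
def christoffel {m : ℕ} (g : (Fin m → ℝ) → Matrix (Fin m) (Fin m) ℝ)
    (k i j : Fin m) (x : Fin m → ℝ) : ℝ :=
  (1 / 2) * ∑ l, (g x)⁻¹ k l *
    (pd i (fun y => g y j l) x + pd j (fun y => g y i l) x - pd l (fun y => g y i j) x)

/-- Riemann curvature tensor
`R_{ijkl} = Σ_m g_{lm}(∂_i Γ^m_{jk} − ∂_j Γ^m_{ik} + Σ_p (Γ^m_{ip} Γ^p_{jk} − Γ^m_{jp} Γ^p_{ik}))`. -/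
def riemann {m : ℕ} (g : (Fin m → ℝ) → Matrix (Fin m) (Fin m) ℝ)
    (i j k l : Fin m) (x : Fin m → ℝ) : ℝ :=
  ∑ mm, g x l mm *
    (pd i (christoffel g mm j k) x - pd j (christoffel g mm i k) x
      + ∑ p, (christoffel g mm i p x * christoffel g p j k x
              - christoffel g mm j p x * christoffel g p i k x))

/-- Ricci tensor `Rc_{jk} = Σ_{i,l} g^{il} R_{ijkl}`. -/
def ricci {m : ℕ} (g : (Fin m → ℝ) → Matrix (Fin m) (Fin m) ℝ)
    (j k : Fin m) (x : Fin m → ℝ) : ℝ :=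
  ∑ i, ∑ l, (g x)⁻¹ i l * riemann g i j k l x

/-- Scalar curvature `S = Σ_{j,k} g^{jk} Rc_{jk}`. -/
def scalarCurv {m : ℕ} (g : (Fin m → ℝ) → Matrix (Fin m) (Fin m) ℝ)
    (x : Fin m → ℝ) : ℝ :=
  ∑ j, ∑ k, (g x)⁻¹ j k * ricci g j k x

/-- Schouten tensor `P_{ij} = (1/(m−2))(Rc_{ij} − (S/(2(m−1))) g_{ij})`. -/
def schouten {m : ℕ} (g : (Fin m → ℝ) → Matrix (Fin m) (Fin m) ℝ)
    (i j : Fin m) (x : Fin m → ℝ) : ℝ :=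
  (1 / ((m : ℝ) - 2)) * (ricci g i j x - scalarCurv g x / (2 * ((m : ℝ) - 1)) * g x i j)

/-- Weyl tensor `W_{ijkl} = R_{ijkl} − (P ∧○ g)_{ijkl}`, where `∧○` is the Kulkarni–Nomizu
product `(a ∧○ b)_{ijkl} = a_{il} b_{jk} + a_{jk} b_{il} − a_{ik} b_{jl} − a_{jl} b_{ik}`. -/
def weyl {m : ℕ} (g : (Fin m → ℝ) → Matrix (Fin m) (Fin m) ℝ)
    (i j k l : Fin m) (x : Fin m → ℝ) : ℝ :=
  riemann g i j k l x -
    (schouten g i l x * g x j k + schouten g j k x * g x i l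
      - schouten g i k x * g x j l - schouten g j l x * g x i k)

/-- Covariant derivative of the Schouten tensor:
`P_{ij,k} = ∂_k P_{ij} − Σ_l Γ^l_{ki} P_{lj} − Σ_l Γ^l_{kj} P_{il}`. -/
def schoutenCov {m : ℕ} (g : (Fin m → ℝ) → Matrix (Fin m) (Fin m) ℝ)
    (i j k : Fin m) (x : Fin m → ℝ) : ℝ :=
  pd k (fun y => schouten g i j y) x
    - ∑ l, christoffel g l k i x * schouten g l j x
    - ∑ l, christoffel g l k j x * schouten g i l x

/-- Cotton tensor `C_{ijk} = P_{ij,k} − P_{ik,j}`. -/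
def cotton {m : ℕ} (g : (Fin m → ℝ) → Matrix (Fin m) (Fin m) ℝ)
    (i j k : Fin m) (x : Fin m → ℝ) : ℝ :=
  schoutenCov g i j k x - schoutenCov g i k j x

-- HELPERS
/-- Indicator. -/
def dl {n : ℕ} (a i : Fin n) : ℝ := if i = a then 1 else 0

/-- Diagonal metric with one warped direction. -/
def met {n : ℕ} (a b : Fin n) (f : ℝ → ℝ) (x : Fin n → ℝ) : Matrix (Fin n) (Fin n) ℝ :=
  Matrix.diagonal (fun i => if i = b then f (x a) ^ 2 else 1)

lemma pd_comp {n : ℕ} (a m : Fin n) (h : ℝ → ℝ) (h' : ℝ) (x : Fin n → ℝ)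
    (hh : HasDerivAt h h' (x a)) : pd m (fun y => h (y a)) x = dl a m * h' := by
  have h1 : HasFDerivAt (fun y : Fin n → ℝ => y a)
      (ContinuousLinearMap.proj (R := ℝ) (φ := fun _ : Fin n => ℝ) a) x :=
    (ContinuousLinearMap.proj (R := ℝ) (φ := fun _ : Fin n => ℝ) a).hasFDerivAt
  have h2 := hh.comp_hasFDerivAt x h1
  unfold pd
  have h3 : (fun y : Fin n → ℝ => h (y a)) = h ∘ (fun y => y a) := rfl
  rw [h3, h2.fderiv]
  by_cases hm : m = a
  · subst hm; simp [dl]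
  · simp [dl, hm, Pi.single_apply, Ne.symm hm]

lemma met_inv {n : ℕ} (a b : Fin n) (f : ℝ → ℝ) (hfpos : ∀ t, 0 < f t) (x : Fin n → ℝ) :
    (met a b f x)⁻¹ = Matrix.diagonal (fun i => if i = b then (f (x a) ^ 2)⁻¹ else 1) := by
  apply Matrix.inv_eq_left_inv
  unfold met
  rw [Matrix.diagonal_mul_diagonal, ← Matrix.diagonal_one]
  congr 1
  funext i
  have := (hfpos (x a)).ne'
  split_ifs <;> field_simp

lemma sum_diag {n : ℕ} (d : Fin n → ℝ) (l : Fin n) (F : Fin n → ℝ) :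
    ∑ m, Matrix.diagonal d l m * F m = d l * F l := by
  rw [Finset.sum_eq_single l]
  · simp
  · intro m _ hm
    simp [Matrix.diagonal_apply_ne _ (Ne.symm hm)]
  · simp

lemma pd_met {n : ℕ} (a b : Fin n) (f : ℝ → ℝ) (hf : ContDiff ℝ 3 f)
    (m i j : Fin n) (x : Fin n → ℝ) :
    pd m (fun y => met a b f y i j) x =
      dl a m * (dl b i * dl b j * (2 * f (x a) * deriv f (x a))) := by
  have hd : HasDerivAt f (deriv f (x a)) (x a) :=
    (hf.differentiable (by norm_num) (x a)).hasDerivAt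
  have h1 : (fun y => met a b f y i j) = fun y : Fin n → ℝ =>
      (fun t => dl b i * dl b j * f t ^ 2 + (if i = j then 1 - dl b i else 0)) (y a) := by
    funext y
    by_cases hij : i = j
    · subst hij
      by_cases hb : i = b <;> simp [met, dl, hb]
    · by_cases hb : i = b
      · subst hb
        simp [met, dl, Matrix.diagonal_apply_ne _ hij, hij, Ne.symm hij]
      · simp [met, dl, Matrix.diagonal_apply_ne _ hij, hij, hb]
  rw [h1]
  refine pd_comp a m
    (fun t => dl b i * dl b j * f t ^ 2 + (if i = j then 1 - dl b i else 0)) _ x ?_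
  have h2 := ((hd.pow 2).const_mul (dl b i * dl b j)).add_const (if i = j then 1 - dl b i else 0)
  refine HasDerivAt.congr_deriv h2 ?_
  push_cast
  ring

lemma chr_met {n : ℕ} (a b : Fin n) (hab : a ≠ b) (f : ℝ → ℝ) (hfpos : ∀ t, 0 < f t)
    (hf : ContDiff ℝ 3 f) (k i j : Fin n) (x : Fin n → ℝ) :
    christoffel (met a b f) k i j x =
      dl a k * dl b i * dl b j * (-(f (x a) * deriv f (x a)))
      + dl b k * (dl a i * dl b j + dl b i * dl a j) * (deriv f (x a) / f (x a)) := by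
  unfold christoffel
  rw [met_inv a b f hfpos, sum_diag]
  simp only [pd_met a b f hf]
  have := (hfpos (x a)).ne'
  by_cases hk : k = b
  · subst hk
    have e2 : dl k k = 1 := by simp [dl]
    have e3 : dl a k = 0 := by simp [dl, Ne.symm hab]
    rw [if_pos rfl, e2, e3]
    field_simp
    ring
  · have e5 : dl b k = 0 := by simp [dl, hk]
    rw [if_neg hk, e5]
    ring

lemma pd_chr {n : ℕ} (a b : Fin n) (hab : a ≠ b) (f : ℝ → ℝ) (hfpos : ∀ t, 0 < f t)
    (hf : ContDiff ℝ 3 f) (m k i j : Fin n) (x : Fin n → ℝ) :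
    pd m (christoffel (met a b f) k i j) x = dl a m *
      (dl a k * dl b i * dl b j * (-(deriv f (x a) * deriv f (x a) + f (x a) * deriv (deriv f) (x a)))
      + dl b k * (dl a i * dl b j + dl b i * dl a j) *
        ((deriv (deriv f) (x a) * f (x a) - deriv f (x a) * deriv f (x a)) / f (x a) ^ 2)) := by
  have hd : HasDerivAt f (deriv f (x a)) (x a) :=
    (hf.differentiable (by norm_num) (x a)).hasDerivAt
  have hf2 : ContDiff ℝ (2 + 1) f := by
    have : (2 + 1 : WithTop ℕ∞) = 3 := by norm_num
    rw [this]; exact hf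
  have hd2 : HasDerivAt (deriv f) (deriv (deriv f) (x a)) (x a) :=
    ((contDiff_succ_iff_deriv.1 hf2).2.2.differentiable (by norm_num) (x a)).hasDerivAt
  have h1 : christoffel (met a b f) k i j = fun y : Fin n → ℝ =>
      (fun t => dl a k * dl b i * dl b j * (-(f t * deriv f t))
      + dl b k * (dl a i * dl b j + dl b i * dl a j) * (deriv f t / f t)) (y a) := by
    funext y
    exact chr_met a b hab f hfpos hf k i j y
  rw [h1]
  refine pd_comp a m (fun t => dl a k * dl b i * dl b j * (-(f t * deriv f t))
      + dl b k * (dl a i * dl b j + dl b i * dl a j) * (deriv f t / f t)) _ x ?_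
  exact ((hd.mul hd2).neg.const_mul (dl a k * dl b i * dl b j)).add
    ((hd2.div hd (hfpos _).ne').const_mul _)

lemma sum_two {n : ℕ} (a b : Fin n) (hab : a ≠ b) (F : Fin n → ℝ)
    (h : ∀ c, c ≠ a → c ≠ b → F c = 0) : ∑ p, F p = F a + F b :=
  Finset.sum_eq_add a b hab (fun c _ hc => h c hc.1 hc.2) (by simp) (by simp)

lemma riem_met {n : ℕ} (a b : Fin n) (hab : a ≠ b) (f : ℝ → ℝ) (hfpos : ∀ t, 0 < f t)
    (hf : ContDiff ℝ 3 f) (i j k l : Fin n) (x : Fin n → ℝ) :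
    riemann (met a b f) i j k l x = -(f (x a) * deriv (deriv f) (x a)) *
      ((dl a i * dl b j - dl b i * dl a j) * (dl b k * dl a l - dl a k * dl b l)) := by
  unfold riemann
  have hm : met a b f x = Matrix.diagonal (fun i => if i = b then f (x a) ^ 2 else 1) := rfl
  rw [hm, sum_diag]
  simp only [pd_chr a b hab f hfpos hf, chr_met a b hab f hfpos hf]
  rw [sum_two a b hab _ (by intro c hc hc'; simp [dl, hc, hc'])]
  have h0 := (hfpos (x a)).ne'
  have e1 : dl a a = 1 := by simp [dl]
  have e2 : dl b b = 1 := by simp [dl]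
  have e3 : dl a b = 0 := by simp [dl, Ne.symm hab]
  have e4 : dl b a = 0 := by simp [dl, hab]
  rw [e1, e2, e3, e4]
  by_cases hl : l = b
  · subst hl
    rw [if_pos rfl, e2, e3]
    field_simp
    ring
  · have e5 : dl b l = 0 := by simp [dl, hl]
    rw [if_neg hl, e5]
    field_simp
    ring

lemma ric_met {n : ℕ} (a b : Fin n) (hab : a ≠ b) (f : ℝ → ℝ) (hfpos : ∀ t, 0 < f t)
    (hf : ContDiff ℝ 3 f) (j k : Fin n) (x : Fin n → ℝ) :
    ricci (met a b f) j k x = -(f (x a) * deriv (deriv f) (x a)) *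
      (dl b j * dl b k + (f (x a) ^ 2)⁻¹ * dl a j * dl a k) := by
  unfold ricci
  rw [met_inv a b f hfpos]
  simp only [sum_diag, riem_met a b hab f hfpos hf]
  rw [sum_two a b hab _ (by intro c hc hc'; simp [dl, hc, hc'])]
  have e1 : dl a a = 1 := by simp [dl]
  have e2 : dl b b = 1 := by simp [dl]
  have e3 : dl a b = 0 := by simp [dl, Ne.symm hab]
  have e4 : dl b a = 0 := by simp [dl, hab]
  rw [e1, e2, e3, e4, if_neg hab, if_pos rfl]
  ring

lemma scal_met {n : ℕ} (a b : Fin n) (hab : a ≠ b) (f : ℝ → ℝ) (hfpos : ∀ t, 0 < f t)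
    (hf : ContDiff ℝ 3 f) (x : Fin n → ℝ) :
    scalarCurv (met a b f) x = -2 * (f (x a) * deriv (deriv f) (x a)) * (f (x a) ^ 2)⁻¹ := by
  unfold scalarCurv
  rw [met_inv a b f hfpos]
  simp only [sum_diag, ric_met a b hab f hfpos hf]
  rw [sum_two a b hab _ (by intro c hc hc'; simp [dl, hc, hc'])]
  have e1 : dl a a = 1 := by simp [dl]
  have e2 : dl b b = 1 := by simp [dl]
  have e3 : dl a b = 0 := by simp [dl, Ne.symm hab]
  have e4 : dl b a = 0 := by simp [dl, hab]
  rw [e1, e2, e3, e4, if_neg hab, if_pos rfl]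
  ring

lemma weyl_met {n : ℕ} (hn : 3 ≤ n) (a b : Fin n) (hab : a ≠ b) (f : ℝ → ℝ)
    (hfpos : ∀ t, 0 < f t) (hf : ContDiff ℝ 3 f) (x : Fin n → ℝ) :
    weyl (met a b f) a b b a x = -(((n : ℝ) - 3) / ((n : ℝ) - 1))
            * (f (x a) * deriv (deriv f) (x a)) := by
  have e1 : dl a a = 1 := by simp [dl]
  have e2 : dl b b = 1 := by simp [dl]
  have e3 : dl a b = 0 := by simp [dl, Ne.symm hab]
  have e4 : dl b a = 0 := by simp [dl, hab]
  have g1 : met a b f x a a = 1 := by simp [met, hab]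
  have g2 : met a b f x b b = f (x a) ^ 2 := by simp [met]
  have g3 : met a b f x a b = 0 := by simp [met, hab]
  have g4 : met a b f x b a = 0 := by simp [met, Ne.symm hab]
  unfold weyl schouten
  simp only [riem_met a b hab f hfpos hf, ric_met a b hab f hfpos hf, scal_met a b hab f hfpos hf,
    e1, e2, e3, e4, g1, g2, g3, g4]
  have h0 := (hfpos (x a)).ne'
  have hn' : (3 : ℝ) ≤ n := by exact_mod_cast hn
  have h1 : (n : ℝ) - 1 ≠ 0 := by linarith
  have h2 : (n : ℝ) - 2 ≠ 0 := by linarith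
  field_simp
  ring

/-- Let `n ≥ 3` and `f : ℝ → (0,∞)` of class `C³`. For the metric
`k = (dx¹)² + f(x¹)²(dx²)² + (dx³)² + ⋯ + (dxⁿ)²` on `{x ∈ ℝⁿ : x¹ > 0}`, the Weyl tensor
satisfies `W₁₂₂₁ = −((n−3)/(n−1)) f f''`. -/
theorem stmt15 (n : ℕ) (hn : 3 ≤ n) (f : ℝ → ℝ) (hfpos : ∀ t, 0 < f t) (hf : ContDiff ℝ 3 f)
    (k : (Fin n → ℝ) → Matrix (Fin n) (Fin n) ℝ)
    (hk : ∀ x, k x = Matrix.diagonal (fun i =>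
      if i = (⟨1, by omega⟩ : Fin n) then f (x ⟨0, by omega⟩) ^ 2 else 1)) :
    ∀ x : Fin n → ℝ, 0 < x ⟨0, by omega⟩ →
      weyl k ⟨0, by omega⟩ ⟨1, by omega⟩ ⟨1, by omega⟩ ⟨0, by omega⟩ x
        = -(((n : ℝ) - 3) / ((n : ℝ) - 1))
            * (f (x ⟨0, by omega⟩) * deriv (deriv f) (x ⟨0, by omega⟩)) := by
  intro x _
  have hk' : k = met (⟨0, by omega⟩ : Fin n) (⟨1, by omega⟩ : Fin n) f := funext hk
  rw [hk']
  exact weyl_met hn _ _ (by simp) f hfpos hf x
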